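/- If β ∈ 𝔽_q((1/z)) has positive degree and is algebraic over 𝔽_q(z), then for every x ∈ 𝔽_q[[1/z]] that is algebraic over 𝔽_q(z), the β-expansion d_β(x) is p-automatic. -/

import Mathlib

/-!
`β`-expansions of formal Laurent series.  The field `𝔽_q((1/z))` is modelled as
the field of Laurent series `LaurentSeries F = HahnSeries ℤ F` over a finite
field `F` of cardinality `q`, with variable `X = 1/z`; then `deg x = -x.order`,
the subring `𝔽_q[[1/z]]` is `{x | 0 ≤ x.order}`, and `𝔽_q(z) = 𝔽_q(1/z)` is the
field `RatFunc F` of rational functions.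
-/

/-- A sequence `b : ℕ → α` is `k`-automatic if its `k`-kernel
`{ (b (n k^i + j))_n : i ≥ 0, 0 ≤ j < k^i }` is finite. -/
def IsKAutomatic {α : Type*} (k : ℕ) (b : ℕ → α) : Prop :=
  {c : ℕ → α | ∃ i j : ℕ, j < k ^ i ∧ c = fun n => b (n * k ^ i + j)}.Finite

/-- The integer part `[x]` of a Laurent series in `𝔽_q((1/z))`: the sum of the
terms involving nonnegative powers of `z` (i.e. nonpositive powers of the
variable `X = 1/z`); it corresponds to a polynomial in `z`. -/
noncomputable def intPart {F : Type*} [Field F] (x : LaurentSeries F) : LaurentSeries F where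
  coeff n := if n ≤ 0 then x.coeff n else 0
  isPWO_support' := x.isPWO_support'.mono (by
    intro n hn
    simp only [Function.mem_support, ne_eq] at hn ⊢
    intro h
    apply hn
    simp [h])

/-- The `β`-transformation `T(x) = βx - [βx]` on `𝔽_q[[1/z]]`. -/
noncomputable def betaT {F : Type*} [Field F] (β : LaurentSeries F) (x : LaurentSeries F) :
    LaurentSeries F :=
  β * x - intPart (β * x)

/-- The digit sequence `d_β(x) = {a_n}_{n ≥ 1}` of the `β`-expansion of `x`
(reindexed from `0`):  `betaDigits β x n = a_{n+1} = [β ⬝ Tⁿ(x)]`. -/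
noncomputable def betaDigits {F : Type*} [Field F] (β x : LaurentSeries F) :
    ℕ → LaurentSeries F :=
  fun n => intPart (β * (betaT β)^[n] x)

open scoped RatFunc

/-!
Put `X = 1/z` and let `m` be the degree of `β` in `z`. Collecting in each digit the coefficient of
`zˡ`, the expansion of an element `y` of `XF[[X]]` reads `y = ∑_{l < m} e_l(1/β) zˡ`, where `e_l`
is the generating series of those coefficients. By Christol's theorem it suffices that every `e_l`
is algebraic over `F(X)`.

The substitution `φ : g(X) ↦ g(1/β)` makes `F((X))` an extension of itself with basis
`1, z, …, z^(m-1)`, and `z` is algebraic over `φ(F(X)) = F(1/β)` because `β` is algebraic over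
`F(z)`. As `y` is algebraic over `F(X)` and `F` is perfect, `y` is one of finitely many series `b_i`
satisfying a *Frobenius system* `b_i = ∑ⱼ r_{ij} b_jᵖ` with `r_{ij} ∈ F(X)`. Taking coordinates
with respect to the basis, the coordinates of the `b_i` satisfy a Frobenius system whose
coefficients are algebraic over `F(X)`, and this forces them to be algebraic.
-/

/-! ### Automatic sequences -/

namespace IsKAutomatic

variable {α δ ι : Type*} {k : ℕ}

theorem of_mem_finite_decimation_closed {S : Set (ℕ → α)} (hS : S.Finite)
    (hdec : ∀ s ∈ S, ∀ j < k, (fun n => s (k * n + j)) ∈ S) {s : ℕ → α} (hs : s ∈ S) :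
    IsKAutomatic k s := by
  have kernel_subset : ∀ i, ∀ s ∈ S, ∀ j < k ^ i, (fun n => s (n * k ^ i + j)) ∈ S := by
    intro i
    induction i with
    | zero =>
      intro s hs j hj
      obtain rfl : j = 0 := by simpa using hj
      simpa using hs
    | succ i ih =>
      intro s hs j hj
      rw [pow_succ'] at hj
      have hk : 0 < k := Nat.pos_of_mul_pos_right (Nat.zero_lt_of_lt hj)
      convert ih _ (hdec s hs (j % k) (Nat.mod_lt j hk)) (j / k) (Nat.div_lt_of_lt_mul hj)
        using 3 with n
      conv_lhs => rw [← Nat.div_add_mod j k]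
      ring
  refine hS.subset ?_
  rintro _ ⟨i, j, hj, rfl⟩
  exact kernel_subset i s hs j hj

theorem map_pi [Finite ι] {s : ι → ℕ → α} (hs : ∀ i, IsKAutomatic k (s i)) (f : (ι → α) → δ) :
    IsKAutomatic k (fun n => f (fun i => s i n)) := by
  refine ((Set.Finite.pi' hs).image (fun c n => f (fun i => c i n))).subset ?_
  rintro _ ⟨i, j, hj, rfl⟩
  exact ⟨fun l n => s l (n * k ^ i + j), fun l => ⟨i, j, hj, rfl⟩, rfl⟩

end IsKAutomatic

/-! ### Cartier operators -/

open Polynomial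

section Cartier

variable {R : Type*} [CommRing R] {p : ℕ} [ExpChar R p]

theorem coeff_powerSeries_pow_expChar (f : PowerSeries R) (n : ℕ) :
    PowerSeries.coeff n (f ^ p) = if p ∣ n then PowerSeries.coeff (n / p) f ^ p else 0 := by
  have hp : p ≠ 0 := expChar_ne_zero R p
  have hpow : f ^ p = (PowerSeries.expand p hp f).map (frobenius R p) :=
    (MvPowerSeries.map_frobenius_expand p hp).symm
  rw [hpow, PowerSeries.coeff_map, PowerSeries.coeff_expand]
  split_ifs <;> simp [frobenius_def, hp]

theorem coeff_coe_powerSeries_pow_expChar (f : PowerSeries R) (n : ℤ) :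
    ((f : LaurentSeries R) ^ p).coeff n =
      if (p : ℤ) ∣ n then (f : LaurentSeries R).coeff (n / p) ^ p else 0 := by
  have hp : 0 < p := expChar_pos R p
  rw [← PowerSeries.coe_pow]
  rcases lt_or_ge n 0 with hn | hn
  · have hdiv : n / p < 0 := Int.ediv_neg_of_neg_of_pos hn (mod_cast hp)
    rw [PowerSeries.coeff_coe, if_pos hn, PowerSeries.coeff_coe, if_pos hdiv, zero_pow hp.ne',
      ite_self]
  · lift n to ℕ using hn
    rw [LaurentSeries.coeff_coe_powerSeries, coeff_powerSeries_pow_expChar, ← Int.natCast_div,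
      LaurentSeries.coeff_coe_powerSeries]
    exact if_congr Int.natCast_dvd_natCast.symm rfl rfl

theorem coeff_laurentSeries_pow_expChar (g : LaurentSeries R) (n : ℤ) :
    (g ^ p).coeff n = if (p : ℤ) ∣ n then g.coeff (n / p) ^ p else 0 := by
  have hp : (p : ℤ) ≠ 0 := mod_cast expChar_ne_zero R p
  have hpow : g ^ p =
      HahnSeries.single (p * g.order) 1 * (g.powerSeriesPart : LaurentSeries R) ^ p := by
    nth_rw 1 [← LaurentSeries.single_order_mul_powerSeriesPart g]
    rw [mul_pow, HahnSeries.single_pow, one_pow, nsmul_eq_mul]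
  rw [hpow, HahnSeries.coeff_single_mul, one_mul, coeff_coe_powerSeries_pow_expChar]
  refine if_congr (dvd_sub_left (dvd_mul_right _ _)) ?_ rfl
  rw [Int.sub_mul_ediv_left _ _ hp]
  conv_rhs => rw [← LaurentSeries.single_order_mul_powerSeriesPart g]
  rw [HahnSeries.coeff_single_mul, one_mul]

theorem coeff_single_mul_pow_expChar (g : LaurentSeries R) {i j : ℕ} (hi : i < p) (hj : j < p)
    (n : ℤ) : (HahnSeries.single (i : ℤ) 1 * g ^ p).coeff (p * n + j) =
      if i = j then g.coeff n ^ p else 0 := by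
  have hp : (p : ℤ) ≠ 0 := mod_cast expChar_ne_zero R p
  rw [HahnSeries.coeff_single_mul, one_mul, coeff_laurentSeries_pow_expChar]
  split_ifs with hdvd hij hij
  · rw [hij, add_sub_cancel_right, Int.mul_ediv_cancel_left _ hp]
  · rw [add_sub_assoc, dvd_add_right (dvd_mul_right _ _)] at hdvd
    have := Int.eq_zero_of_abs_lt_dvd hdvd (by rw [abs_lt]; omega)
    omega
  · simp [hij] at hdvd
  · rfl

variable [PerfectRing R p]

variable (p) in
/-- The `j`-th Cartier operator on Laurent series over a perfect ring of characteristic `p`,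
extracting the `p`-th root of the part of `y` supported in degrees congruent to `j` modulo `p`. -/
noncomputable def cartier (j : ℕ) : LaurentSeries R →+ LaurentSeries R where
  toFun y := HahnSeries.ofSuppBddBelow
    (fun n => (frobeniusEquiv R p).symm (y.coeff (p * n + j)))
    ⟨min y.order 0 - j, fun n hn => by
      have hp : (1 : ℤ) ≤ p := mod_cast expChar_pos R p
      have hle : y.order ≤ p * n + j :=
        HahnSeries.order_le_of_coeff_ne_zero fun h => hn (by simp only [h, map_zero])
      by_contra! hlt
      nlinarith [min_le_left y.order 0, min_le_right y.order 0]⟩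
  map_zero' := by ext n; simp
  map_add' x y := by ext n; exact map_add (frobeniusEquiv R p).symm _ _

theorem coeff_cartier (j : ℕ) (y : LaurentSeries R) (n : ℤ) :
    (cartier p j y).coeff n = (frobeniusEquiv R p).symm (y.coeff (p * n + j)) :=
  rfl

theorem coeff_cartier_pow (j : ℕ) (y : LaurentSeries R) (n : ℤ) :
    (cartier p j y).coeff n ^ p = y.coeff (p * n + j) := by
  rw [coeff_cartier, frobeniusEquiv_symm_pow_p]

theorem cartier_sum_single_mul_pow (g : ℕ → LaurentSeries R) {j : ℕ} (hj : j < p) :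
    cartier p j (∑ i ∈ Finset.range p, HahnSeries.single (i : ℤ) 1 * g i ^ p) = g j := by
  ext n
  rw [coeff_cartier, HahnSeries.coeff_sum, Finset.sum_congr rfl fun i hi =>
    coeff_single_mul_pow_expChar (g i) (Finset.mem_range.1 hi) hj n]
  simp [hj]

theorem sum_single_mul_cartier_pow (y : LaurentSeries R) :
    ∑ i ∈ Finset.range p, HahnSeries.single (i : ℤ) 1 * cartier p i y ^ p = y := by
  ext n
  have hp : 0 < p := expChar_pos R p
  obtain ⟨j, hj, hn⟩ : ∃ j < p, n = p * (n / p) + (j : ℕ) :=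
    ⟨(n % p).toNat, by have := Int.emod_lt_of_pos n (mod_cast hp : (0 : ℤ) < p); omega, by
      rw [Int.toNat_of_nonneg (Int.emod_nonneg _ (mod_cast hp.ne')), Int.mul_ediv_add_emod]⟩
  rw [hn, HahnSeries.coeff_sum, Finset.sum_congr rfl fun i hi =>
    coeff_single_mul_pow_expChar (cartier p i y) (Finset.mem_range.1 hi) hj (n / p)]
  simp [hj, coeff_cartier_pow]

theorem cartier_mul_pow (y h : LaurentSeries R) {j : ℕ} (hj : j < p) :
    cartier p j (y * h ^ p) = cartier p j y * h := by
  conv_lhs => rw [← sum_single_mul_cartier_pow (p := p) y]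
  simp only [Finset.sum_mul, mul_assoc, ← mul_pow]
  exact cartier_sum_single_mul_pow (fun i => cartier p i y * h) hj

end Cartier

section RationalFunctions

variable {F : Type*} [Field F]

theorem algebraMap_polynomial_laurentSeries (P : F[X]) :
    algebraMap F[X] (LaurentSeries F) P = ((P : PowerSeries F) : LaurentSeries F) := by
  rw [RatFunc.coe_coe, RatFunc.coePolynomial, ← IsScalarTower.algebraMap_apply]

theorem coeff_algebraMap_polynomial_laurentSeries (P : F[X]) (n : ℤ) :
    (algebraMap F[X] (LaurentSeries F) P).coeff n = if n < 0 then 0 else P.coeff n.natAbs := by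
  rw [algebraMap_polynomial_laurentSeries, PowerSeries.coeff_coe, Polynomial.coeff_coe]

variable {p : ℕ} [Fact p.Prime] [CharP F p] [PerfectRing F p]

theorem exists_polynomial_eq_cartier {N : ℕ} {P : F[X]} (hP : P ∈ degreeLT F (p * N)) {j : ℕ}
    (hj : j < p) : ∃ Q ∈ degreeLT F N, algebraMap F[X] (LaurentSeries F) Q =
      cartier p j (algebraMap F[X] (LaurentSeries F) P) := by
  have coeff_P : ∀ n, p * N ≤ n → P.coeff n = 0 := fun n hn =>
    coeff_eq_zero_of_degree_lt ((mem_degreeLT.1 hP).trans_le (mod_cast hn))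
  refine ⟨PowerSeries.trunc N (.mk fun n => (frobeniusEquiv F p).symm (P.coeff (p * n + j))),
    mem_degreeLT.2 (PowerSeries.degree_trunc_lt _ _), ?_⟩
  ext n
  rw [coeff_cartier, coeff_algebraMap_polynomial_laurentSeries,
    coeff_algebraMap_polynomial_laurentSeries]
  rcases lt_or_ge n 0 with hn | hn
  · have hneg : p * n + j < 0 := by nlinarith
    rw [if_pos hn, if_pos hneg, map_zero]
  · lift n to ℕ using hn
    have hnonneg : ¬ ((p * n + j : ℕ) : ℤ) < 0 := Int.not_ofNat_neg _
    rw [← Nat.cast_mul, ← Nat.cast_add, if_neg (Int.not_ofNat_neg n), if_neg hnonneg,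
      Int.natAbs_natCast, Int.natAbs_natCast, PowerSeries.coeff_trunc, PowerSeries.coeff_mk]
    split_ifs with hnN
    · rfl
    · rw [coeff_P _ (by nlinarith), map_zero]

theorem exists_ratFunc_eq_cartier (c : RatFunc F) {j : ℕ} (hj : j < p) :
    ∃ r : RatFunc F, algebraMap (RatFunc F) (LaurentSeries F) r =
      cartier p j (algebraMap (RatFunc F) (LaurentSeries F) c) := by
  have hp : p.Prime := Fact.out
  set A := algebraMap F[X] (LaurentSeries F)
  have hdenom : A c.denom ≠ 0 :=
    (map_ne_zero_iff _ (FaithfulSMul.algebraMap_injective F[X] (LaurentSeries F))).2 c.denom_ne_zero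
  have hc : algebraMap (RatFunc F) (LaurentSeries F) c =
      A (c.num * c.denom ^ (p - 1)) * (A c.denom)⁻¹ ^ p := by
    nth_rw 1 [← RatFunc.num_div_denom c]
    rw [RatFunc.algebraMap_apply_div, inv_pow, ← div_eq_mul_inv,
      div_eq_div_iff hdenom (pow_ne_zero _ hdenom), map_mul, map_pow, mul_assoc, ← pow_succ,
      Nat.sub_add_cancel hp.one_le]
  obtain ⟨Q, -, hQ⟩ := exists_polynomial_eq_cartier (p := p) (P := c.num * c.denom ^ (p - 1))
    (N := (c.num * c.denom ^ (p - 1)).natDegree + 1) (mem_degreeLT.2 (degree_le_natDegree.trans_lt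
      (mod_cast Nat.lt_of_lt_of_le (Nat.lt_succ_self _) (Nat.le_mul_of_pos_left _ hp.pos)))) hj
  refine ⟨algebraMap _ _ Q / algebraMap _ _ c.denom, ?_⟩
  rw [RatFunc.algebraMap_apply_div, hc, cartier_mul_pow _ _ hj, ← hQ, div_eq_mul_inv]

theorem linearIndependent_pow_char {ι : Type*} {v : ι → LaurentSeries F}
    (hv : LinearIndependent (RatFunc F) v) : LinearIndependent (RatFunc F) (fun i => v i ^ p) := by
  have hp : p.Prime := Fact.out
  rw [linearIndependent_iff'] at hv ⊢
  intro s c hc i hi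
  choose! r hr using fun i j (hj : j < p) => exists_ratFunc_eq_cartier (c i) hj
  have relation : ∀ j < p, ∑ i ∈ s, r i j • v i = 0 := by
    intro j hj
    have := congrArg (cartier p j) hc
    simpa [Algebra.smul_def, cartier_mul_pow _ _ hj, hr _ _ hj] using this
  have cartier_eq_zero :
      ∀ j < p, cartier p j (algebraMap (RatFunc F) (LaurentSeries F) (c i)) = 0 := by
    intro j hj
    rw [← hr i j hj, hv s _ (relation j hj) i hi, map_zero]
  rw [← map_eq_zero (algebraMap (RatFunc F) (LaurentSeries F)),
    ← sum_single_mul_cartier_pow (p := p) (algebraMap (RatFunc F) (LaurentSeries F) (c i))]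
  refine Finset.sum_eq_zero fun j hj => ?_
  rw [cartier_eq_zero j (Finset.mem_range.1 hj), zero_pow hp.ne_zero, mul_zero]

end RationalFunctions

/-! ### Frobenius systems and Christol's theorem -/

theorem exists_frobenius_system {k K : Type*} [Field k] [Field K] [Algebra k K] {p : ℕ}
    (hpow : ∀ {n : ℕ} {v : Fin n → K}, LinearIndependent k v →
      LinearIndependent k (fun i => v i ^ p)) {g : K} (hg : IsAlgebraic k g) :
    ∃ (ι : Type) (_ : Fintype ι) (b : ι → K) (r : ι → ι → k),
      (∀ i, b i = ∑ j, r i j • b j ^ p) ∧ g ∈ Set.range b := by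
  let M := IntermediateField.adjoin k {g}
  have : FiniteDimensional k M := IntermediateField.adjoin.finiteDimensional hg.isIntegral
  let e := Module.finBasis k M
  have indep_pow : LinearIndependent k (fun i => e i ^ p) :=
    .of_comp M.val.toLinearMap
      (hpow (e.linearIndependent.map' M.val.toLinearMap (LinearMap.ker_eq_bot.2 M.val.injective)))
  have exists_repr : ∀ x : M, ∃ c : _ → k, ∑ i, c i • e i ^ p = x := fun x =>
    (Submodule.mem_span_range_iff_exists_fun k).1
      (by rw [indep_pow.span_eq_top_of_card_eq_finrank' (by simp)]; trivial)
  choose c hc using exists_repr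
  let b : Option (Fin (Module.finrank k M)) → M :=
    fun i => i.elim ⟨g, IntermediateField.mem_adjoin_simple_self k g⟩ e
  refine ⟨_, inferInstance, fun i => b i, fun i j => j.elim 0 (c (b i)), fun i => ?_, none, rfl⟩
  have := congrArg M.val (hc (b i))
  simpa [b, Fintype.sum_option] using this.symm

section Christol

variable {F : Type*} [Field F] {p : ℕ} [Fact p.Prime] [CharP F p]

theorem exists_polynomial_frobenius_system [PerfectRing F p] {g : LaurentSeries F}
    (hg : IsAlgebraic (RatFunc F) g) :
    ∃ (ι : Type) (_ : Fintype ι) (D : F[X]) (e : ι → LaurentSeries F) (s : ι → ι → F[X]),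
      (∀ i, e i = ∑ j, algebraMap F[X] (LaurentSeries F) (s i j) * e j ^ p) ∧
      ∃ i, g = algebraMap F[X] (LaurentSeries F) D * e i := by
  have hp : p.Prime := Fact.out
  obtain ⟨ι, _, b, r, hb, i₀, rfl⟩ := exists_frobenius_system (p := p) linearIndependent_pow_char hg
  obtain ⟨⟨D, hD⟩, hDr⟩ := IsLocalization.exist_integer_multiples_of_finite (nonZeroDivisors F[X])
    (fun ij : ι × ι => r ij.1 ij.2)
  choose t ht using fun i j => hDr (i, j)
  set A := algebraMap F[X] (LaurentSeries F)
  have hAD : A D ≠ 0 :=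
    (map_ne_zero_iff _ (FaithfulSMul.algebraMap_injective F[X] (LaurentSeries F))).2
      (nonZeroDivisors.ne_zero hD)
  have hr : ∀ i j, A D * algebraMap (RatFunc F) (LaurentSeries F) (r i j) = A (t i j) := by
    intro i j
    have := congrArg (algebraMap (RatFunc F) (LaurentSeries F)) (ht i j)
    simpa [A, Algebra.smul_def, ← IsScalarTower.algebraMap_apply] using this.symm
  -- Dividing the `b i` by the common denominator `D` multiplies the coefficients by `D ^ (p - 1)`.
  refine ⟨ι, inferInstance, D, fun i => b i / A D, fun i j => t i j * D ^ (p - 2), fun i => ?_, i₀,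
    (mul_div_cancel₀ _ hAD).symm⟩
  dsimp only
  rw [div_eq_iff hAD, hb i, Finset.sum_mul]
  refine Finset.sum_congr rfl fun j _ => ?_
  obtain ⟨q, rfl⟩ := Nat.exists_eq_add_of_le hp.two_le
  rw [map_mul, map_pow, ← hr, Algebra.smul_def, Nat.add_sub_cancel_left, div_pow]
  field_simp
  ring

theorem exists_cartier_sum_mul_eq [PerfectRing F p] {ι : Type*} [Fintype ι]
    {e : ι → LaurentSeries F} {s : ι → ι → F[X]}
    (he : ∀ i, e i = ∑ j, algebraMap F[X] (LaurentSeries F) (s i j) * e j ^ p) {N : ℕ}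
    (hs : ∀ i j, (s i j).natDegree ≤ N) (Q : ι → degreeLT F N) {j : ℕ} (hj : j < p) :
    ∃ R : ι → degreeLT F N, cartier p j (∑ i, algebraMap F[X] (LaurentSeries F) (Q i) * e i) =
      ∑ i, algebraMap F[X] (LaurentSeries F) (R i) * e i := by
  have hp : p.Prime := Fact.out
  have expand_pow : ∑ i, algebraMap F[X] (LaurentSeries F) (Q i) * e i =
      ∑ l, algebraMap F[X] (LaurentSeries F) (∑ i, Q i * s i l) * e l ^ p := by
    simp only [map_sum, map_mul, Finset.sum_mul]
    rw [Finset.sum_comm]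
    refine Finset.sum_congr rfl fun i _ => ?_
    nth_rw 1 [he i]
    simp only [Finset.mul_sum, mul_assoc]
  have hdeg : ∀ l, ∑ i, (Q i : F[X]) * s i l ∈ degreeLT F (p * N) := by
    refine fun l => Submodule.sum_mem _ fun i _ => mem_degreeLT.2 ?_
    calc ((Q i : F[X]) * s i l).degree
        ≤ (Q i : F[X]).degree + (s i l).degree := degree_mul_le _ _
      _ ≤ (Q i : F[X]).degree + N := by gcongr; exact degree_le_of_natDegree_le (hs i l)
      _ < (N : WithBot ℕ) + N :=
        WithBot.add_lt_add_right (WithBot.natCast_ne_bot N) (mem_degreeLT.1 (Q i).2)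
      _ ≤ ((p * N : ℕ) : WithBot ℕ) := mod_cast by nlinarith [hp.two_le]
  choose R hR hcartier using fun l => exists_polynomial_eq_cartier (hdeg l) hj
  refine ⟨fun l => ⟨R l, hR l⟩, ?_⟩
  rw [expand_pow, map_sum]
  simp only [cartier_mul_pow _ _ hj, hcartier]

theorem exists_finite_cartier_stable [Finite F] {g : LaurentSeries F}
    (hg : IsAlgebraic (RatFunc F) g) :
    ∃ S : Set (LaurentSeries F), S.Finite ∧ g ∈ S ∧ ∀ y ∈ S, ∀ j < p, cartier p j y ∈ S := by
  obtain ⟨ι, _, D, e, s, he, i₀, rfl⟩ := exists_polynomial_frobenius_system (p := p) hg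
  obtain ⟨N, hDN, hsN⟩ : ∃ N, D.natDegree < N ∧ ∀ i j, (s i j).natDegree ≤ N := by
    obtain ⟨B, hB⟩ := (Set.finite_range fun ij : ι × ι => (s ij.1 ij.2).natDegree).bddAbove
    exact ⟨D.natDegree + 1 + B, by omega, fun i j => (hB ⟨(i, j), rfl⟩).trans le_add_self⟩
  have hD : D ∈ degreeLT F N := mem_degreeLT.2 (degree_le_natDegree.trans_lt (mod_cast hDN))
  have : Finite (degreeLT F N) := Finite.of_equiv _ (degreeLTEquiv F N).symm.toEquiv
  refine ⟨Set.range fun Q : ι → degreeLT F N => ∑ i, algebraMap F[X] (LaurentSeries F) (Q i) * e i,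
    Set.finite_range _, ?_, ?_⟩
  · classical
    refine ⟨Pi.single i₀ ⟨D, hD⟩, (Finset.sum_eq_single i₀ ?_ ?_).trans ?_⟩ <;>
      simp +contextual
  · rintro _ ⟨Q, rfl⟩ j hj
    obtain ⟨R, hR⟩ := exists_cartier_sum_mul_eq he hsN Q hj
    exact ⟨R, hR.symm⟩

theorem isKAutomatic_coeff_of_isAlgebraic [Finite F] {g : LaurentSeries F}
    (hg : IsAlgebraic (RatFunc F) g) : IsKAutomatic p (fun n : ℕ => g.coeff n) := by
  obtain ⟨S, hS, hgS, hstable⟩ := exists_finite_cartier_stable (p := p) hg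
  -- `σ` absorbs the `p`-th roots by which the Cartier operators differ from decimation.
  refine IsKAutomatic.of_mem_finite_decimation_closed
    (S := Set.image2 (fun y (σ : F → F) (n : ℕ) => σ (y.coeff n)) S Set.univ)
    (hS.image2 _ Set.finite_univ) ?_ ⟨g, hgS, id, trivial, rfl⟩
  rintro _ ⟨y, hy, σ, -, rfl⟩ j hj
  refine ⟨cartier p j y, hstable y hy j hj, fun a => σ (a ^ p), trivial, ?_⟩
  simp only [coeff_cartier_pow, Nat.cast_add, Nat.cast_mul]

end Christol

/-! ### Coordinates of solutions of Frobenius systems -/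

section Ore

variable {E G ι : Type*} [Field E] [Field G] [Algebra E G] [Fintype ι]

theorem linearIndependent_pow_of_transcendental {x : G} (hx : Transcendental E x) :
    LinearIndependent E (fun n : ℕ => x ^ n) := by
  have := (basisMonomials E).linearIndependent.map' (aeval (R := E) x).toLinearMap
    (LinearMap.ker_eq_bot.2 (transcendental_iff_injective.1 hx))
  simpa [Function.comp_def, aeval_monomial] using this

variable {p : ℕ} [ExpChar G p]

theorem pow_iterate_mem_span {e : ι → G} {a : ι → ι → E} (he : ∀ i, e i = ∑ j, a i j • e j ^ p)
    {t s : ℕ} (hts : t ≤ s) (i : ι) :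
    e i ^ p ^ t ∈ Submodule.span E (Set.range fun j => e j ^ p ^ s) := by
  obtain ⟨d, rfl⟩ := Nat.exists_eq_add_of_le hts
  induction d generalizing i with
  | zero => exact Submodule.subset_span ⟨i, rfl⟩
  | succ d ih =>
    refine Submodule.span_le.2 ?_ (ih i (Nat.le_add_right t d))
    rintro _ ⟨j, rfl⟩
    have : e j ^ p ^ (t + d) = ∑ l, a j l ^ p ^ (t + d) • e l ^ p ^ (t + (d + 1)) := by
      nth_rw 1 [he j]
      rw [sum_pow_char_pow]
      simp only [_root_.smul_pow, ← pow_mul, ← pow_succ', add_assoc]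
    simp only [this]
    exact Submodule.sum_mem _ fun l _ => Submodule.smul_mem _ _ (Submodule.subset_span ⟨l, rfl⟩)

theorem isAlgebraic_of_eq_sum_smul_pow (hp : 1 < p) {e : ι → G} {a : ι → ι → E}
    (he : ∀ i, e i = ∑ j, a i j • e j ^ p) (i : ι) : IsAlgebraic E (e i) := by
  by_contra htrans
  let N := Fintype.card ι
  let V := Submodule.span E (Set.range fun j => e j ^ p ^ N)
  have : FiniteDimensional E V := FiniteDimensional.span_of_finite E (Set.finite_range _)
  have indep : LinearIndependent E (fun t : Fin (N + 1) => e i ^ p ^ (t : ℕ)) :=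
    (linearIndependent_pow_of_transcendental htrans).comp (fun t : Fin (N + 1) => p ^ (t : ℕ))
      ((Nat.pow_right_injective hp).comp Fin.val_injective)
  have span_le : Submodule.span E (Set.range fun t : Fin (N + 1) => e i ^ p ^ (t : ℕ)) ≤ V :=
    Submodule.span_le.2 (Set.range_subset_iff.2 fun t =>
      pow_iterate_mem_span he (Nat.lt_succ_iff.1 t.2) i)
  have hcard : N + 1 ≤ N := calc
    N + 1 = Module.finrank E
        (Submodule.span E (Set.range fun t : Fin (N + 1) => e i ^ p ^ (t : ℕ))) := by
      rw [finrank_span_eq_card indep, Fintype.card_fin]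
    _ ≤ Module.finrank E V := Submodule.finrank_mono span_le
    _ ≤ N := finrank_range_le_card _
  omega

end Ore

theorem powerBasis_repr_mul_pow_expChar {R S : Type*} [CommRing R] [CommRing S] [Algebra R S]
    {p : ℕ} [ExpChar S p] (pb : PowerBasis R S) (r w : S) (i : Fin pb.dim) :
    pb.basis.repr (r * w ^ p) i =
      ∑ l : Fin pb.dim, pb.basis.repr (r * pb.gen ^ ((l : ℕ) * p)) i * pb.basis.repr w l ^ p := by
  have pow_eq : w ^ p = ∑ l, (pb.basis.repr w l) ^ p • pb.gen ^ ((l : ℕ) * p) := by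
    conv_lhs => rw [← pb.basis.sum_repr w]
    simp only [sum_pow_char, _root_.smul_pow, pb.basis_eq_pow, ← pow_mul]
  rw [pow_eq, Finset.mul_sum, map_sum, Finsupp.coe_finsetSum, Finset.sum_apply]
  exact Finset.sum_congr rfl fun l _ => by
    rw [mul_smul_comm, map_smul, Finsupp.smul_apply, smul_eq_mul, mul_comm]

section Coordinates

variable {k G K : Type*} [Field k] [Field G] [Field K]
variable [Algebra k G] [Algebra G K] [Algebra k K] [IsScalarTower k G K]

theorem minpoly_eq_map_of_forall_isAlgebraic_mem_range
    (hk : ∀ y : G, IsAlgebraic k y → y ∈ (algebraMap k G).range) {z : K} (hz : IsAlgebraic k z) :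
    minpoly G z = (minpoly k z).map (algebraMap k G) := by
  have hint := hz.isIntegral
  have hdvd := minpoly.dvd_map_of_isScalarTower k G z
  obtain ⟨Q, hQ, -, -⟩ : ∃ Q : k[X], Q.map (algebraMap k G) = minpoly G z ∧
      Q.degree = (minpoly G z).degree ∧ Q.Monic :=
    lifts_and_degree_eq_and_monic ((lifts_iff_coeff_lifts _).2 fun n =>
      hk _ (isIntegral_coeff_of_dvd _ _ (minpoly.monic hint) (minpoly.monic hint.tower_top)
        hdvd n).isAlgebraic) (minpoly.monic hint.tower_top)
  have hroot : aeval z Q = 0 := by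
    rw [← aeval_map_algebraMap G z Q, hQ, minpoly.aeval]
  refine eq_of_monic_of_associated (minpoly.monic hint.tower_top) ((minpoly.monic hint).map _)
    (associated_of_dvd_dvd hdvd ?_)
  rw [← hQ]
  exact Polynomial.map_dvd _ (minpoly.dvd _ _ hroot)

theorem isAlgebraic_powerBasis_repr_of_mem_adjoin (pb : PowerBasis G K)
    (hz : IsAlgebraic k pb.gen) {w : K} (hw : w ∈ IntermediateField.adjoin k {pb.gen})
    (i : Fin pb.dim) : IsAlgebraic k (pb.basis.repr w i) := by
  let E := algebraicClosure k G
  have : IsScalarTower k E K := IsScalarTower.of_algebraMap_eq fun r =>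
    IsScalarTower.algebraMap_apply k G K r
  have hzE : IsAlgebraic E pb.gen := hz.extendScalars (algebraMap k E).injective
  have hmin : minpoly G pb.gen = (minpoly E pb.gen).map (algebraMap E G) :=
    minpoly_eq_map_of_forall_isAlgebraic_mem_range
      (fun y hy => ⟨⟨y, mem_algebraicClosure_iff.2 (hy.restrictScalars k)⟩, rfl⟩) hzE
  obtain ⟨P, rfl⟩ : ∃ P : k[X], aeval pb.gen P = w := by
    rwa [← IntermediateField.mem_toSubalgebra,
      IntermediateField.adjoin_simple_toSubalgebra_of_isAlgebraic hz,
      Algebra.adjoin_singleton_eq_range_aeval] at hw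
  have repr_isIntegral : IsIntegral E (pb.basis.repr (aeval pb.gen P) i) := by
    rw [aeval_eq_sum_range, map_sum, Finsupp.coe_finsetSum, Finset.sum_apply]
    refine IsIntegral.sum _ fun n _ => ?_
    rw [← IsScalarTower.algebraMap_smul G (P.coeff n), map_smul, Finsupp.smul_apply, smul_eq_mul]
    exact isIntegral_algebraMap.tower_top.mul
      (PowerBasis.repr_gen_pow_isIntegral hzE.isIntegral hmin n i)
  exact repr_isIntegral.isAlgebraic.restrictScalars k

theorem isAlgebraic_powerBasis_repr_of_eq_sum_mul_pow {ι : Type*} [Fintype ι] {p : ℕ} [ExpChar G p]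
    (hp : 1 < p) (pb : PowerBasis G K) (hz : IsAlgebraic k pb.gen) {b : ι → K} {r : ι → ι → K}
    (hr : ∀ i j, r i j ∈ IntermediateField.adjoin k {pb.gen})
    (hb : ∀ i, b i = ∑ j, r i j * b j ^ p) (i : ι) (l : Fin pb.dim) :
    IsAlgebraic k (pb.basis.repr (b i) l) := by
  have : ExpChar K p := expChar_of_injective_algebraMap (algebraMap G K).injective p
  have gen_mem := IntermediateField.mem_adjoin_simple_self k pb.gen
  let a (s t : ι × Fin pb.dim) : algebraicClosure k G :=
    ⟨pb.basis.repr (r s.1 t.1 * pb.gen ^ ((t.2 : ℕ) * p)) s.2, mem_algebraicClosure_iff.2 <|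
      isAlgebraic_powerBasis_repr_of_mem_adjoin pb hz (mul_mem (hr _ _) (pow_mem gen_mem _)) _⟩
  have system (s : ι × Fin pb.dim) :
      pb.basis.repr (b s.1) s.2 = ∑ t, a s t • pb.basis.repr (b t.1) t.2 ^ p := by
    rw [Fintype.sum_prod_type, hb s.1, map_sum, Finsupp.coe_finsetSum, Finset.sum_apply]
    exact Finset.sum_congr rfl fun j _ => powerBasis_repr_mul_pow_expChar pb _ _ _
  exact (isAlgebraic_of_eq_sum_smul_pow hp system (i, l)).restrictScalars k

end Coordinates

theorem isAlgebraic_coordinates_of_eq_sum_mul_pow {k G K ι : Type*} [Field k] [Field G] [Field K]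
    [Algebra k G] [Fintype ι] {p : ℕ} [ExpChar G p] (hp : 1 < p) (φ : G →+* K) {z : K} {m : ℕ}
    (hbij : Function.Bijective fun e : Fin m → G => ∑ l, φ (e l) * z ^ (l : ℕ))
    (hz : ∃ Q : k[X], Q ≠ 0 ∧ Q.eval₂ (φ.comp (algebraMap k G)) z = 0)
    {b : ι → K} {r : ι → ι → K}
    (hr : ∀ i j, r i j ∈ Subfield.closure (Set.range (φ.comp (algebraMap k G)) ∪ {z}))
    (hb : ∀ i, b i = ∑ j, r i j * b j ^ p) {i : ι} {e : Fin m → G}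
    (he : b i = ∑ l, φ (e l) * z ^ (l : ℕ)) (l : Fin m) : IsAlgebraic k (e l) := by
  let _ : Algebra G K := φ.toAlgebra
  let _ : Algebra k K := (φ.comp (algebraMap k G)).toAlgebra
  have : IsScalarTower k G K := IsScalarTower.of_algebraMap_eq fun _ => rfl
  let coordinates : (Fin m → G) ≃ₗ[G] K := LinearEquiv.ofBijective
    (Fintype.linearCombination G fun l : Fin m => z ^ (l : ℕ)) hbij
  have ofEquivFun_eq_pow (l : Fin m) :
      Module.Basis.ofEquivFun coordinates.symm l = z ^ (l : ℕ) := by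
    rw [Module.Basis.coe_ofEquivFun, LinearEquiv.symm_symm]
    exact (Fintype.linearCombination_apply_single G _ l 1).trans (one_smul G _)
  let pb : PowerBasis G K :=
    { gen := z
      dim := m
      basis := Module.Basis.ofEquivFun coordinates.symm
      basis_eq_pow := ofEquivFun_eq_pow }
  have repr_eq : pb.basis.repr (b i) l = e l := by
    have : b i = coordinates e := he
    simp [pb, this]
  exact repr_eq ▸ isAlgebraic_powerBasis_repr_of_eq_sum_mul_pow hp pb hz hr hb i l

/-! ### Substitution of a Laurent series of positive order -/

section Substitution

open HahnSeries (single)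

variable {F : Type*} [Field F]

theorem order_inv_laurentSeries (x : LaurentSeries F) : x⁻¹.order = -x.order := by
  rcases eq_or_ne x 0 with rfl | hx
  · simp
  · have := HahnSeries.order_mul hx (inv_ne_zero hx)
    rw [mul_inv_cancel₀ hx, HahnSeries.order_one] at this
    omega

theorem order_zpow_laurentSeries (x : LaurentSeries F) (n : ℤ) : (x ^ n).order = n * x.order := by
  obtain ⟨n, rfl | rfl⟩ := n.eq_nat_or_neg <;> simp [order_inv_laurentSeries]

variable {γ : LaurentSeries F}

theorem ne_zero_of_order_pos (hγ : 0 < γ.order) : γ ≠ 0 := by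
  rintro rfl
  simp at hγ

theorem zero_le_order_heval (hγ : 0 < γ.order) (f : PowerSeries F) :
    0 ≤ (PowerSeries.heval γ f).order := by
  rw [← HahnSeries.zero_le_orderTop_iff, HahnSeries.le_orderTop_iff_forall]
  intro i hi
  rw [PowerSeries.coeff_heval]
  refine finsum_eq_zero_of_forall_eq_zero fun n => ?_
  rw [HahnSeries.SummableFamily.coeff_apply]
  refine HahnSeries.coeff_eq_zero_of_lt_orderTop (hi.trans_le ?_)
  rw [HahnSeries.SummableFamily.powerSeriesFamily_of_orderTop_pos
    (HahnSeries.zero_lt_orderTop_of_order hγ)]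
  refine le_trans ?_ (HahnSeries.orderTop_le_orderTop_smul _ _)
  rw [HahnSeries.zero_le_orderTop_iff, HahnSeries.order_pow]
  exact nsmul_nonneg hγ.le n

theorem order_heval_eq_zero (hγ : 0 < γ.order) {f : PowerSeries F}
    (hf : PowerSeries.constantCoeff f ≠ 0) :
    (PowerSeries.heval γ f).order = 0 :=
  (HahnSeries.order_le_of_coeff_ne_zero (by rwa [PowerSeries.coeff_heval_zero])).antisymm
    (zero_le_order_heval hγ f)

theorem heval_injective (hγ : 0 < γ.order) :
    Function.Injective (PowerSeries.heval (R := F) γ) := by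
  refine (injective_iff_map_eq_zero _).2 fun f hf => by_contra fun hf0 => ?_
  have hunit := PowerSeries.isUnit_divided_by_X_pow_order hf0
  rw [← PowerSeries.X_pow_order_mul_divXPowOrder (f := f), map_mul, map_pow,
    PowerSeries.heval_X _ (HahnSeries.zero_lt_orderTop_of_order hγ)] at hf
  exact mul_ne_zero (pow_ne_zero _ (ne_zero_of_order_pos hγ))
    (hunit.map (PowerSeries.heval γ)).ne_zero hf

variable (hγ : 0 < γ.order)

/-- The endomorphism `g(X) ↦ g(γ)` of `F((X))`, for `γ` of positive order. -/
noncomputable def laurentSubst : LaurentSeries F →+* LaurentSeries F :=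
  IsFractionRing.lift (A := PowerSeries F)
    (g := RingHomClass.toRingHom (PowerSeries.heval (R := F) γ)) (heval_injective hγ)

theorem laurentSubst_coe (f : PowerSeries F) :
    laurentSubst hγ f = PowerSeries.heval γ f :=
  IsFractionRing.lift_algebraMap (A := PowerSeries F)
    (g := RingHomClass.toRingHom (PowerSeries.heval (R := F) γ)) (heval_injective hγ) f

theorem laurentSubst_X : laurentSubst hγ (single 1 1) = γ := by
  rw [← PowerSeries.coe_X, laurentSubst_coe,
    PowerSeries.heval_X _ (HahnSeries.zero_lt_orderTop_of_order hγ)]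

theorem laurentSubst_C (c : F) : laurentSubst hγ (HahnSeries.C c) = HahnSeries.C c := by
  rw [← PowerSeries.coe_C, laurentSubst_coe, PowerSeries.heval_C, PowerSeries.coe_C]
  ext n
  simp [HahnSeries.coeff_one, HahnSeries.coeff_single, HahnSeries.C_apply]

theorem order_laurentSubst (g : LaurentSeries F) :
    (laurentSubst hγ g).order = g.order * γ.order := by
  rcases eq_or_ne g 0 with rfl | hg
  · simp
  have hconst : PowerSeries.constantCoeff g.powerSeriesPart ≠ 0 := by
    rw [← PowerSeries.coeff_zero_eq_constantCoeff_apply, LaurentSeries.powerSeriesPart_coeff]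
    simpa using HahnSeries.coeff_order_eq_zero.not.2 hg
  have hcoe_ne : laurentSubst hγ g.powerSeriesPart ≠ 0 := by
    rwa [_root_.map_ne_zero, ne_eq, map_eq_zero_iff _ HahnSeries.ofPowerSeries_injective,
      LaurentSeries.powerSeriesPart_eq_zero]
  conv_lhs => rw [← LaurentSeries.single_order_mul_powerSeriesPart g, RatFunc.single_zpow, map_mul,
    map_zpow₀, laurentSubst_X]
  rw [HahnSeries.order_mul (zpow_ne_zero _ (ne_zero_of_order_pos hγ)) hcoe_ne, laurentSubst_coe,
    order_heval_eq_zero hγ hconst, order_zpow_laurentSeries, add_zero]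

end Substitution

section SubstitutionBasis

open HahnSeries (single)

variable {F : Type*} [Field F]

theorem sum_ne_zero_of_injective_order {ι : Type*} {s : Finset ι} (hs : s.Nonempty)
    {f : ι → LaurentSeries F} (hf : ∀ i ∈ s, f i ≠ 0)
    (hinj : Set.InjOn (fun i => (f i).order) s) : ∑ i ∈ s, f i ≠ 0 := by
  classical
  obtain ⟨j, hj, hmin⟩ := s.exists_min_image (fun i => (f i).order) hs
  have hrest : (f j).orderTop < (∑ i ∈ s.erase j, f i).orderTop := by
    refine (HahnSeries.addVal ℤ F).map_lt_sum (HahnSeries.orderTop_ne_top.2 (hf j hj))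
      fun i hi => ?_
    obtain ⟨hij, his⟩ := Finset.mem_erase.1 hi
    rw [HahnSeries.addVal_apply, ← HahnSeries.order_eq_orderTop_of_ne_zero (hf j hj),
      ← HahnSeries.order_eq_orderTop_of_ne_zero (hf i his), WithTop.coe_lt_coe]
    exact (hmin i his).lt_of_ne fun h => hij (hinj his hj h.symm)
  rw [← Finset.add_sum_erase s f hj, ← HahnSeries.orderTop_ne_top,
    HahnSeries.orderTop_add_eq_left hrest]
  exact HahnSeries.orderTop_ne_top.2 (hf j hj)

variable {γ : LaurentSeries F} (hγ : 0 < γ.order)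

theorem laurentSubst_mul_pow_ne_zero {g : LaurentSeries F} (hg : g ≠ 0) (l : ℕ) :
    laurentSubst hγ g * single (-1) 1 ^ l ≠ 0 :=
  mul_ne_zero ((_root_.map_ne_zero _).2 hg)
    (pow_ne_zero _ (HahnSeries.single_ne_zero one_ne_zero))

theorem order_laurentSubst_mul_pow {g : LaurentSeries F} (hg : g ≠ 0) (l : ℕ) :
    (laurentSubst hγ g * single (-1) 1 ^ l).order = g.order * γ.order - l := by
  have hne := laurentSubst_mul_pow_ne_zero hγ hg l
  rw [HahnSeries.order_mul (left_ne_zero_of_mul hne) (right_ne_zero_of_mul hne),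
    order_laurentSubst, HahnSeries.order_pow, HahnSeries.order_single one_ne_zero, nsmul_eq_mul,
    mul_neg_one, sub_eq_add_neg]

theorem injective_sum_laurentSubst_mul_pow {m : ℕ} (hm : γ.order = m) :
    Function.Injective fun e : Fin m → LaurentSeries F =>
      ∑ l, laurentSubst hγ (e l) * single (-1) 1 ^ (l : ℕ) := by
  classical
  have sum_ne_zero (e : Fin m → LaurentSeries F) (he : e ≠ 0) :
      ∑ l, laurentSubst hγ (e l) * single (-1) 1 ^ (l : ℕ) ≠ 0 := by
    obtain ⟨l₀, hl₀⟩ := Function.ne_iff.1 he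
    rw [← Finset.sum_filter_of_ne (p := fun l => e l ≠ 0) (by simp +contextual)]
    refine sum_ne_zero_of_injective_order ⟨l₀, by simpa using hl₀⟩
      (fun l hl => laurentSubst_mul_pow_ne_zero hγ (Finset.mem_filter.1 hl).2 l) ?_
    intro l hl l' hl' horder
    -- The orders are distinct because they are congruent to `-l` modulo `m`.
    have hmod : (l : ℤ) ≡ l' [ZMOD m] := by
      simp only [order_laurentSubst_mul_pow hγ (Finset.mem_filter.1 hl).2,
        order_laurentSubst_mul_pow hγ (Finset.mem_filter.1 hl').2, hm] at horder
      refine Int.modEq_iff_dvd.2 ⟨(e l').order - (e l).order, ?_⟩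
      linear_combination horder
    exact Fin.ext (Nat.ModEq.eq_of_lt_of_lt (Int.natCast_modEq_iff.1 hmod) l.2 l'.2)
  intro e e' h
  by_contra hne
  refine sum_ne_zero (e - e') (sub_ne_zero.2 hne) ?_
  simpa [sub_mul] using sub_eq_zero.2 h

end SubstitutionBasis

/-! ### Digit series -/

section Digits

open HahnSeries (single)

variable {F : Type*} [Field F]

theorem zero_lt_orderTop_iff_forall {R : Type*} [Zero R] {x : HahnSeries ℤ R} :
    0 < x.orderTop ↔ ∀ n ≤ 0, x.coeff n = 0 := by
  refine ⟨fun hx n hn => HahnSeries.coeff_eq_zero_of_lt_orderTop (hx.trans_le' (mod_cast hn)),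
    fun hx => not_le.1 fun hle => ?_⟩
  obtain ⟨n, hn, hcoeff⟩ := HahnSeries.orderTop_lt_iff_exists.1
    (hle.trans_lt (WithTop.coe_lt_coe.2 (zero_lt_one' ℤ)))
  exact hcoeff (hx n (Int.lt_add_one_iff.1 (WithTop.coe_lt_coe.1 hn)))

theorem zero_le_order_coe {R : Type*} [Semiring R] (f : PowerSeries R) :
    0 ≤ (f : LaurentSeries R).order := by
  rw [← HahnSeries.zero_le_orderTop_iff, HahnSeries.le_orderTop_iff_forall]
  intro n hn
  rw [PowerSeries.coeff_coe, if_pos (mod_cast hn)]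

theorem zero_lt_orderTop_betaT (β x : LaurentSeries F) : 0 < (betaT β x).orderTop := by
  refine zero_lt_orderTop_iff_forall.2 fun n hn => ?_
  simp [betaT, intPart, hn]

theorem intPart_eq_sum_C_mul_pow {y : LaurentSeries F} {M : ℕ}
    (hy : ((-M : ℤ) : WithTop ℤ) < y.orderTop) :
    intPart y = ∑ l : Fin M, HahnSeries.C (y.coeff (-(l : ℤ))) * single (-1) 1 ^ (l : ℕ) := by
  have term_eq (l : ℕ) (c : F) : HahnSeries.C c * single (-1 : ℤ) 1 ^ l = single (-(l : ℤ)) c := by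
    simp [HahnSeries.C_apply]
  ext n
  rw [Fin.sum_univ_eq_sum_range fun l => HahnSeries.C (y.coeff (-(l : ℤ))) * single (-1) 1 ^ l]
  simp only [intPart, HahnSeries.coeff_sum, term_eq, HahnSeries.coeff_single]
  rcases lt_or_ge 0 n with hn | hn
  · exact (if_neg hn.not_ge).trans (Finset.sum_eq_zero fun l _ => if_neg (by omega)).symm
  obtain ⟨k, rfl⟩ := Int.exists_eq_neg_ofNat hn
  simp only [neg_inj, Nat.cast_inj, Finset.sum_ite_eq, hn, if_true, Finset.mem_range]
  split_ifs with hk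
  · rfl
  · exact HahnSeries.coeff_eq_zero_of_lt_orderTop (hy.trans_le' (WithTop.coe_le_coe.2 (by omega)))

/-- The generating series `∑_{n ≥ 0} a_{n+1,i} Xⁿ` of the coefficients `a_{n,i}` of `zⁱ` in the
digits `aₙ`, `n ≥ 1`, of the `β`-expansion of `x`. -/
noncomputable def digitSeries (β x : LaurentSeries F) (i : ℕ) : PowerSeries F :=
  PowerSeries.mk fun n => (betaDigits β x n).coeff (-(i : ℤ))

theorem digitSeries_eq_C_add_X_mul (β x : LaurentSeries F) (i : ℕ) :
    digitSeries β x i =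
      PowerSeries.C ((β * x).coeff (-(i : ℤ))) + PowerSeries.X * digitSeries β (betaT β x) i := by
  ext n
  cases n with
  | zero => simp [digitSeries, betaDigits, intPart]
  | succ n => simp [digitSeries, betaDigits, PowerSeries.coeff_succ_X_mul]

variable {β : LaurentSeries F} (hβ : 0 < β⁻¹.order)

/-- The value `∑_{n ≥ 1} aₙ β⁻ⁿ` of the `β`-expansion of `x`, with the digits `aₙ` truncated to
degree less than `m` in `z` and the sum arranged by powers of `z`. -/
noncomputable def digitSum (m : ℕ) (x : LaurentSeries F) : LaurentSeries F :=
  ∑ l : Fin m, laurentSubst hβ (single 1 1 * (digitSeries β x l : LaurentSeries F)) *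
    single (-1) 1 ^ (l : ℕ)

theorem mul_digitSum {m : ℕ} {x : LaurentSeries F}
    (hx : ((-m : ℤ) : WithTop ℤ) < (β * x).orderTop) :
    β * digitSum hβ m x = intPart (β * x) + digitSum hβ m (betaT β x) := by
  have hβ0 : β ≠ 0 := inv_eq_zero.not.1 (ne_zero_of_order_pos hβ)
  rw [intPart_eq_sum_C_mul_pow hx, digitSum, digitSum, Finset.mul_sum, ← Finset.sum_add_distrib]
  refine Finset.sum_congr rfl fun l _ => ?_
  rw [digitSeries_eq_C_add_X_mul]
  simp only [map_add, map_mul, PowerSeries.coe_X, PowerSeries.coe_C, laurentSubst_X,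
    laurentSubst_C]
  field_simp

theorem zero_lt_orderTop_digitSum {m : ℕ} (hm : β⁻¹.order = m) (x : LaurentSeries F) :
    0 < (digitSum hβ m x).orderTop := by
  refine (HahnSeries.addVal ℤ F).map_lt_sum WithTop.zero_ne_top fun l _ => ?_
  rw [HahnSeries.addVal_apply]
  rcases eq_or_ne (single 1 1 * (digitSeries β x l : LaurentSeries F)) 0 with h | h
  · simp [h]
  refine HahnSeries.zero_lt_orderTop_of_order ?_
  rw [order_laurentSubst_mul_pow hβ h, hm, HahnSeries.order_mul (left_ne_zero_of_mul h)
    (right_ne_zero_of_mul h), HahnSeries.order_single one_ne_zero]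
  have hl : (l : ℤ) < m := mod_cast l.2
  nlinarith [zero_le_order_coe (digitSeries β x l)]

theorem neg_lt_orderTop_mul {m : ℕ} (hm : β⁻¹.order = m) {y : LaurentSeries F}
    (hy : 0 < y.orderTop) : ((-m : ℤ) : WithTop ℤ) < (β * y).orderTop := by
  rcases eq_or_ne (β * y) 0 with h | h
  · rw [h, HahnSeries.orderTop_zero]
    exact WithTop.coe_lt_top _
  have hy_order := (HahnSeries.zero_lt_orderTop_iff (right_ne_zero_of_mul h)).1 hy
  rw [order_inv_laurentSeries] at hm
  rw [← HahnSeries.order_eq_orderTop_of_ne_zero h, HahnSeries.order_mul (left_ne_zero_of_mul h)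
    (right_ne_zero_of_mul h), WithTop.coe_lt_coe]
  omega

theorem natCast_lt_orderTop_sub_digitSum {m : ℕ} (hm : β⁻¹.order = m) (n : ℕ) {y : LaurentSeries F}
    (hy : 0 < y.orderTop) : ((n : ℤ) : WithTop ℤ) < (y - digitSum hβ m y).orderTop := by
  induction n generalizing y with
  | zero =>
    exact (lt_min hy (zero_lt_orderTop_digitSum hβ hm y)).trans_le
      HahnSeries.min_orderTop_le_orderTop_sub
  | succ n ih =>
    have hβ0 : β ≠ 0 := inv_eq_zero.not.1 (ne_zero_of_order_pos hβ)
    have sub_eq : y - digitSum hβ m y = β⁻¹ * (betaT β y - digitSum hβ m (betaT β y)) := by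
      rw [eq_inv_mul_iff_mul_eq₀ hβ0, mul_sub, mul_digitSum hβ (neg_lt_orderTop_mul hm hy), betaT]
      ring
    rw [sub_eq, HahnSeries.orderTop_mul,
      ← HahnSeries.order_eq_orderTop_of_ne_zero (inv_ne_zero hβ0)]
    calc (((n + 1 : ℕ) : ℤ) : WithTop ℤ)
        ≤ (β⁻¹.order : WithTop ℤ) + (n : ℤ) := by
          norm_cast; push_cast; omega
      _ < β⁻¹.order + (betaT β y - digitSum hβ m (betaT β y)).orderTop :=
        WithTop.add_lt_add_left WithTop.coe_ne_top (ih (zero_lt_orderTop_betaT β y))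

theorem eq_digitSum {m : ℕ} (hm : β⁻¹.order = m) {y : LaurentSeries F} (hy : 0 < y.orderTop) :
    y = digitSum hβ m y := by
  rw [← sub_eq_zero, ← HahnSeries.orderTop_eq_top, WithTop.eq_top_iff_forall_gt]
  intro n
  exact (WithTop.coe_le_coe.2 (Int.self_le_toNat n)).trans_lt
    (natCast_lt_orderTop_sub_digitSum hβ hm n.toNat hy)

end Digits

section SubstitutionBijective

open HahnSeries (single)

variable {F : Type*} [Field F] {β : LaurentSeries F}

theorem exists_zero_lt_orderTop_inv_pow_mul (hβ : 0 < β⁻¹.order) (y : LaurentSeries F) :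
    ∃ N : ℕ, 0 < (β⁻¹ ^ N * y).orderTop := by
  refine ⟨(1 - y.order).toNat, ?_⟩
  rcases eq_or_ne (β⁻¹ ^ (1 - y.order).toNat * y) 0 with h | h
  · rw [h, HahnSeries.orderTop_zero]
    exact WithTop.coe_lt_top _
  rw [HahnSeries.zero_lt_orderTop_iff h, HahnSeries.order_mul (left_ne_zero_of_mul h)
    (right_ne_zero_of_mul h), HahnSeries.order_pow, nsmul_eq_mul]
  nlinarith [Int.self_le_toNat (1 - y.order), Int.natCast_nonneg (1 - y.order).toNat]

theorem bijective_sum_laurentSubst_mul_pow (hβ : 0 < β⁻¹.order) {m : ℕ} (hm : β⁻¹.order = m) :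
    Function.Bijective fun e : Fin m → LaurentSeries F =>
      ∑ l, laurentSubst hβ (e l) * single (-1) 1 ^ (l : ℕ) := by
  refine ⟨injective_sum_laurentSubst_mul_pow hβ hm, fun y => ?_⟩
  have hβ0 : β ≠ 0 := inv_eq_zero.not.1 (ne_zero_of_order_pos hβ)
  obtain ⟨N, hN⟩ := exists_zero_lt_orderTop_inv_pow_mul hβ y
  refine ⟨fun l => (single 1 1)⁻¹ ^ N *
    (single 1 1 * (digitSeries β (β⁻¹ ^ N * y) l : LaurentSeries F)), ?_⟩
  calc _ = β ^ N * digitSum hβ m (β⁻¹ ^ N * y) := by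
        simp only [digitSum, Finset.mul_sum, map_mul, map_pow, map_inv₀, laurentSubst_X, inv_inv,
          mul_assoc]
    _ = y := by rw [← eq_digitSum hβ hm hN, inv_pow, mul_inv_cancel_left₀ (pow_ne_zero N hβ0)]

end SubstitutionBijective

/-! ### Algebraicity of the digit series -/

theorem eval₂_eval₂RingHom_swap {R S : Type*} [CommRing R] [CommRing S] (f : R →+* S) (x y : S)
    (P : R[X][X]) :
    (Bivariate.swap P).eval₂ (eval₂RingHom f y) x = P.eval₂ (eval₂RingHom f x) y := by
  have hom_eq : (eval₂RingHom (eval₂RingHom f y) x).comp (Bivariate.swap : R[X][X] ≃ₐ[R] R[X][X]) =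
      eval₂RingHom (eval₂RingHom f x) y := by
    refine ringHom_ext' (ringHom_ext' ?_ ?_) ?_
    · ext c
      simp [Bivariate.swap_C_C]
    · simp [Bivariate.swap_X]
    · simp [Bivariate.swap_Y]
  exact RingHom.congr_fun hom_eq P

section AlgebraicDigits

open HahnSeries (single)

variable {F : Type*} [Field F]

theorem algebraMap_polynomial_eq_eval₂RingHom : algebraMap F[X] (LaurentSeries F) =
    eval₂RingHom HahnSeries.C (single 1 1) := by
  refine ringHom_ext' (RingHom.ext fun c => ?_) ?_ <;> simp

theorem algebraMap_mem_of_C_mem {S : Subfield (LaurentSeries F)}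
    (hC : ∀ c : F, HahnSeries.C c ∈ S) (hX : single 1 1 ∈ S) (r : RatFunc F) :
    algebraMap (RatFunc F) (LaurentSeries F) r ∈ S := by
  have polynomial_mem (P : F[X]) : algebraMap F[X] (LaurentSeries F) P ∈ S := by
    rw [algebraMap_polynomial_eq_eval₂RingHom, coe_eval₂RingHom, eval₂_eq_sum_range]
    exact sum_mem fun i _ => mul_mem (hC _) (pow_mem hX _)
  rw [← RatFunc.num_div_denom r, RatFunc.algebraMap_apply_div]
  exact div_mem (polynomial_mem _) (polynomial_mem _)

theorem algebraMap_ratFunc_C (c : F) :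
    algebraMap (RatFunc F) (LaurentSeries F) (RatFunc.C c) = HahnSeries.C c := by
  rw [← RatFunc.algebraMap_C, ← IsScalarTower.algebraMap_apply,
    algebraMap_polynomial_eq_eval₂RingHom, coe_eval₂RingHom, eval₂_C]

theorem algebraMap_ratFunc_X_inv :
    algebraMap (RatFunc F) (LaurentSeries F) RatFunc.X⁻¹ = single (-1) 1 := by
  rw [map_inv₀]
  refine (congrArg _ RatFunc.coe_X).trans ?_
  rw [HahnSeries.inv_single, inv_one]

theorem exists_eval₂_laurentSubst_eq_zero {γ : LaurentSeries F} (hγ : 0 < γ.order)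
    (hγalg : IsAlgebraic (RatFunc F) γ) :
    ∃ Q : (RatFunc F)[X], Q ≠ 0 ∧ Q.eval₂ ((laurentSubst hγ).comp
      (algebraMap (RatFunc F) (LaurentSeries F))) (single (-1) 1) = 0 := by
  obtain ⟨P, hP, hPγ⟩ := (IsFractionRing.isAlgebraic_iff F[X] (RatFunc F) (LaurentSeries F)).2 hγalg
  set φ := (laurentSubst hγ).comp (algebraMap (RatFunc F) (LaurentSeries F))
  have φ_polynomial : φ.comp (algebraMap F[X] (RatFunc F)) = eval₂RingHom HahnSeries.C γ := by
    rw [RingHom.comp_assoc, ← IsScalarTower.algebraMap_eq, algebraMap_polynomial_eq_eval₂RingHom]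
    refine ringHom_ext' (RingHom.ext fun c => ?_) ?_
    · simpa using laurentSubst_C hγ c
    · simp [laurentSubst_X]
  -- The relation `P(X, γ) = 0` is an algebraic equation for `X` over `φ(F(X)) = F(γ)`.
  have eval_swap :
      ((Bivariate.swap P).map (algebraMap F[X] (RatFunc F))).eval₂ φ (single 1 1) = 0 := by
    rw [eval₂_map, φ_polynomial, eval₂_eval₂RingHom_swap, ← algebraMap_polynomial_eq_eval₂RingHom]
    exact hPγ
  refine ⟨((Bivariate.swap P).map (algebraMap F[X] (RatFunc F))).reverse, ?_, ?_⟩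
  · rw [ne_eq, reverse_eq_zero,
      Polynomial.map_eq_zero_iff (IsFractionRing.injective F[X] (RatFunc F))]
    simpa using hP
  · let _ : Invertible (single (1 : ℤ) (1 : F)) :=
      invertibleOfNonzero (HahnSeries.single_ne_zero one_ne_zero)
    simpa [HahnSeries.inv_single] using (eval₂_reverse_eq_zero_iff φ (single 1 1) _).2 eval_swap

theorem algebraMap_mem_closure_laurentSubst {γ : LaurentSeries F} (hγ : 0 < γ.order)
    (r : RatFunc F) : algebraMap (RatFunc F) (LaurentSeries F) r ∈ Subfield.closure (Set.range
      ((laurentSubst hγ).comp (algebraMap (RatFunc F) (LaurentSeries F))) ∪ {single (-1) 1}) := by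
  refine algebraMap_mem_of_C_mem
    (fun c => Subfield.subset_closure (.inl ⟨RatFunc.C c, ?const_mem⟩)) ?single_mem r
  case const_mem => rw [RingHom.comp_apply, algebraMap_ratFunc_C, laurentSubst_C]
  case single_mem =>
    have := inv_mem (Subfield.subset_closure (Set.mem_union_right (Set.range
      ((laurentSubst hγ).comp (algebraMap (RatFunc F) (LaurentSeries F))))
      (Set.mem_singleton (single (-1 : ℤ) (1 : F)))))
    rwa [HahnSeries.inv_single, neg_neg, inv_one] at this

theorem isAlgebraic_digitSeries_of_lt {p : ℕ} [Fact p.Prime] [CharP F p] [PerfectRing F p]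
    {β : LaurentSeries F} (hβ : 0 < β⁻¹.order) (hβalg : IsAlgebraic (RatFunc F) β)
    {m : ℕ} (hm : β⁻¹.order = m) {y : LaurentSeries F} (hy : 0 < y.orderTop)
    (hyalg : IsAlgebraic (RatFunc F) y) (l : Fin m) :
    IsAlgebraic (RatFunc F) (digitSeries β y l : LaurentSeries F) := by
  have hp : p.Prime := Fact.out
  have : CharP (LaurentSeries F) p :=
    charP_of_injective_ringHom (HahnSeries.C : F →+* LaurentSeries F).injective p
  have : ExpChar (LaurentSeries F) p := .prime hp
  obtain ⟨ι, _, b, r, hb, i, rfl⟩ :=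
    exists_frobenius_system (p := p) linearIndependent_pow_char hyalg
  have isAlgebraic_shift : IsAlgebraic (RatFunc F)
      (single 1 1 * (digitSeries β (b i) l : LaurentSeries F)) :=
    isAlgebraic_coordinates_of_eq_sum_mul_pow hp.one_lt (laurentSubst hβ)
      (bijective_sum_laurentSubst_mul_pow hβ hm) (exists_eval₂_laurentSubst_eq_zero hβ hβalg.inv)
      (fun i j => algebraMap_mem_closure_laurentSubst hβ (r i j))
      (fun i => by simpa only [Algebra.smul_def] using hb i) (eq_digitSum hβ hm hy) l
  have := (isAlgebraic_algebraMap (A := LaurentSeries F) (RatFunc.X⁻¹ : RatFunc F)).mul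
    isAlgebraic_shift
  rwa [algebraMap_ratFunc_X_inv, ← mul_assoc, HahnSeries.single_mul_single, neg_add_cancel,
    mul_one, HahnSeries.single_zero_one, one_mul] at this

theorem exists_neg_natCast_lt_orderTop (y : LaurentSeries F) :
    ∃ M : ℕ, ((-M : ℤ) : WithTop ℤ) < y.orderTop := by
  refine ⟨(1 - y.order).toNat, ?_⟩
  rcases eq_or_ne y 0 with rfl | hy
  · rw [HahnSeries.orderTop_zero]
    exact WithTop.coe_lt_top _
  · rw [← HahnSeries.order_eq_orderTop_of_ne_zero hy, WithTop.coe_lt_coe]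
    omega

theorem zero_lt_orderTop_iterate_betaT (β : LaurentSeries F) {y : LaurentSeries F}
    (hy : 0 < y.orderTop) (n : ℕ) : 0 < ((betaT β)^[n] y).orderTop := by
  cases n with
  | zero => exact hy
  | succ n =>
    rw [Function.iterate_succ_apply']
    exact zero_lt_orderTop_betaT β _

theorem digitSeries_eq_zero {β : LaurentSeries F} {m : ℕ} (hm : β⁻¹.order = m)
    {y : LaurentSeries F} (hy : 0 < y.orderTop) {i : ℕ} (hi : m ≤ i) : digitSeries β y i = 0 := by
  ext n
  rw [digitSeries, PowerSeries.coeff_mk, map_zero]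
  have := HahnSeries.coeff_eq_zero_of_lt_orderTop <|
    (neg_lt_orderTop_mul hm (zero_lt_orderTop_iterate_betaT β hy n)).trans_le'
      (WithTop.coe_le_coe.2 (neg_le_neg (Nat.cast_le.2 hi)))
  simp [betaDigits, intPart, this]

theorem isAlgebraic_intPart (y : LaurentSeries F) : IsAlgebraic (RatFunc F) (intPart y) := by
  obtain ⟨M, hM⟩ := exists_neg_natCast_lt_orderTop y
  simp only [intPart_eq_sum_C_mul_pow hM, ← algebraMap_ratFunc_C, ← algebraMap_ratFunc_X_inv,
    ← map_pow, ← map_mul, ← map_sum]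
  exact isAlgebraic_algebraMap _

theorem isAlgebraic_digitSeries {p : ℕ} [Fact p.Prime] [CharP F p] [PerfectRing F p]
    {β x : LaurentSeries F} (hβ : β.order < 0) (hβalg : IsAlgebraic (RatFunc F) β)
    (hxalg : IsAlgebraic (RatFunc F) x) (i : ℕ) :
    IsAlgebraic (RatFunc F) (digitSeries β x i : LaurentSeries F) := by
  have hβinv : 0 < β⁻¹.order := by rw [order_inv_laurentSeries]; omega
  obtain ⟨m, hm⟩ := Int.eq_ofNat_of_zero_le hβinv.le
  have tail_isAlgebraic :
      IsAlgebraic (RatFunc F) (digitSeries β (betaT β x) i : LaurentSeries F) := by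
    have hpos := zero_lt_orderTop_betaT β x
    rcases lt_or_ge i m with hi | hi
    · exact isAlgebraic_digitSeries_of_lt (p := p) hβinv hβalg hm hpos
        ((hβalg.mul hxalg).sub (isAlgebraic_intPart _)) ⟨i, hi⟩
    · rw [digitSeries_eq_zero hm hpos hi, PowerSeries.coe_zero]
      exact isAlgebraic_zero
  rw [digitSeries_eq_C_add_X_mul, PowerSeries.coe_add, PowerSeries.coe_mul, PowerSeries.coe_C,
    PowerSeries.coe_X, ← algebraMap_ratFunc_C, ← RatFunc.coe_X]
  exact isAlgebraic_algebraMap _ |>.add ((isAlgebraic_algebraMap _).mul tail_isAlgebraic)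

end AlgebraicDigits

section Conclusion

open HahnSeries (single)

variable {F : Type*} [Field F]

theorem exists_betaDigits_eq_sum {β : LaurentSeries F} (hβ : β.order < 0) (x : LaurentSeries F) :
    ∃ M : ℕ, ∀ n, betaDigits β x n = ∑ i : Fin M,
      HahnSeries.C ((digitSeries β x i : LaurentSeries F).coeff n) * single (-1) 1 ^ (i : ℕ) := by
  have hβinv : 0 < β⁻¹.order := by rw [order_inv_laurentSeries]; omega
  obtain ⟨m, hm⟩ := Int.eq_ofNat_of_zero_le hβinv.le
  obtain ⟨M, hM⟩ := exists_neg_natCast_lt_orderTop (β * x)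
  have digit_bound (n : ℕ) :
      ((-(max m M : ℕ) : ℤ) : WithTop ℤ) < (β * (betaT β)^[n] x).orderTop := by
    cases n with
    | zero => exact hM.trans_le' (WithTop.coe_le_coe.2 (by omega))
    | succ n =>
      rw [Function.iterate_succ_apply']
      exact (neg_lt_orderTop_mul hm (zero_lt_orderTop_betaT β _)).trans_le'
        (WithTop.coe_le_coe.2 (by omega))
  refine ⟨max m M, fun n => ?_⟩
  rw [betaDigits, intPart_eq_sum_C_mul_pow (digit_bound n)]
  simp [digitSeries, betaDigits, intPart, LaurentSeries.coeff_coe_powerSeries]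

theorem betaDigits_automatic_of_algebraic_general {p : ℕ} [Fact p.Prime] [Finite F] [CharP F p]
    {β x : LaurentSeries F} (hβ : β.order < 0) (hβalg : IsAlgebraic (RatFunc F) β)
    (hxalg : IsAlgebraic (RatFunc F) x) : IsKAutomatic p (betaDigits β x) := by
  obtain ⟨M, hM⟩ := exists_betaDigits_eq_sum hβ x
  rw [funext hM]
  exact IsKAutomatic.map_pi (fun i : Fin M => isKAutomatic_coeff_of_isAlgebraic
    (isAlgebraic_digitSeries (p := p) hβ hβalg hxalg i))
    fun v => ∑ i, HahnSeries.C (v i) * single (-1) 1 ^ (i : ℕ)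

end Conclusion

/-- If `β ∈ 𝔽_q((1/z))` has positive degree (`β.order < 0`) and is algebraic
over `𝔽_q(z)`, then for every `x ∈ 𝔽_q[[1/z]]` algebraic over `𝔽_q(z)`, the
`β`-expansion `d_β(x)` is `p`-automatic. -/
theorem betaDigits_automatic_of_algebraic
    (p : ℕ) [Fact p.Prime] (F : Type*) [Field F] [Fintype F] [CharP F p]
    (β : LaurentSeries F) (hβ : β.order < 0)
    (hβalg : IsAlgebraic (RatFunc F) β)
    (x : LaurentSeries F) (hx : 0 ≤ x.order)
    (hxalg : IsAlgebraic (RatFunc F) x) :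
    IsKAutomatic p (betaDigits β x) :=
  betaDigits_automatic_of_algebraic_general hβ hβalg hxalg
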